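/- Let (u_n)_{n≥0} be defined by u_0(x) = 1 for x ≥ 0 and u_0(x) = 0 for x < 0, and u_{n+1}(x) = g((q * u_n)(x)) for all n ≥ 0 and x ∈ ℝ (so u_n is the distribution function of the outcome M_n of the associated random threshold voting model). Let ℓ be the speed of a traveling wave. Then for every ε ∈ (0,1) there exists C > 0 such that for all n ≥ 1: u_n(nℓ + C) ≥ 1 − ε and u_n(nℓ − C) ≤ ε. In particular, setting med_n = inf{x : u_n(x) ≥ 1/2}, one has sup_{n≥1} |med_n − nℓ| < ∞, i.e. the sequence of distributions u_n is tight when centered at its medians. -/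

import Mathlib

open MeasureTheory Filter Topology

/-- Convolution `(q * u)(x) = ∫ q(y) u(x - y) dy`. -/
noncomputable def conv (q u : ℝ → ℝ) (x : ℝ) : ℝ := ∫ y : ℝ, q y * u (x - y)

/-- The shifted kernel `q_ℓ(x) = q(x + ℓ)`. -/
def qshift (q : ℝ → ℝ) (ℓ : ℝ) (x : ℝ) : ℝ := q (x + ℓ)

/-- The bistable setting: a `C¹` compactly supported probability density `q`, and a
polynomial `P` (the recursion polynomial, i.e. `g` on `[0,1]`) with `P(0) = 0`, `P(1) = 1`,
`0 < P < 1` and `P' > 0` on `(0,1)`; the nonlinearity `f(x) = P(x) - x` has a unique zero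
`θ ∈ (0,1)` and `f'(0) < 0`, `f'(1) < 0` (equivalently `P'(0) < 1`, `P'(1) < 1`). -/
structure BistableSetting where
  q : ℝ → ℝ
  P : Polynomial ℝ
  θ : ℝ
  hq_diff : ContDiff ℝ 1 q
  hq_supp : HasCompactSupport q
  hq_nonneg : ∀ x, 0 ≤ q x
  hq_int : ∫ x : ℝ, q x = 1
  hP0 : P.eval 0 = 0
  hP1 : P.eval 1 = 1
  hP_range : ∀ x ∈ Set.Ioo (0 : ℝ) 1, 0 < P.eval x ∧ P.eval x < 1
  hP_mono : ∀ x ∈ Set.Ioo (0 : ℝ) 1, 0 < (Polynomial.derivative P).eval x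
  hθ_mem : θ ∈ Set.Ioo (0 : ℝ) 1
  hθ_zero : P.eval θ = θ
  hθ_unique : ∀ x ∈ Set.Ioo (0 : ℝ) 1, P.eval x = x → x = θ
  hf'0 : (Polynomial.derivative P).eval 0 < 1
  hf'1 : (Polynomial.derivative P).eval 1 < 1

/-- The nonlinearity `g`, equal to the polynomial `P` on `[0,1]` and extended linearly:
`g(x) = x + f'(0)·x` for `x < 0` and `g(x) = x + f'(1)(x-1)` for `x > 1`. -/
noncomputable def BistableSetting.g (S : BistableSetting) (x : ℝ) : ℝ :=
  if x < 0 then (Polynomial.derivative S.P).eval 0 * x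
  else if x ≤ 1 then S.P.eval x
  else 1 + (Polynomial.derivative S.P).eval 1 * (x - 1)

/-- A traveling wave with speed `ℓ`: a nondecreasing `C¹` function `φ` with
`φ = g(q_ℓ * φ)`, `φ(-∞) = 0` and `φ(+∞) = 1`. -/
structure IsTravelingWave (S : BistableSetting) (ℓ : ℝ) (φ : ℝ → ℝ) : Prop where
  mono : Monotone φ
  smooth : ContDiff ℝ 1 φ
  wave_eq : ∀ x, φ x = S.g (conv (qshift S.q ℓ) φ x)
  limit_bot : Tendsto φ atBot (𝓝 0)
  limit_top : Tendsto φ atTop (𝓝 1)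

/-!
This is the squeezing method of Fife and McLeod. If `u₀ ≤ φ (· + a) + δ` with `δ` small, then for
suitable `ρ < 1` and `B'` the function `φ (x - n ℓ + a + B' δ (1 - ρⁿ)) + δ ρⁿ` dominates `uₙ`:
where `φ` is close to `0` or `1`, linear stability of these fixed points contracts the excess
`δ ρⁿ`, and in between a displacement of the front proportional to the excess absorbs it. The
displacements are summable, so `uₙ` stays behind a bounded translate of `φ (· - n ℓ)`, up to `δ`.
The other bound is the same statement for `1 - uₙ (-x)`.

Absorbing the excess requires `φ` to grow at a linear rate on bounded intervals. No derivative of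
`φ` is used: `φ (x + k) - φ x` is bounded below, through the wave equation, by a multiple of `k`
times an increment of `φ` over a window where the kernel is positive, and that increment is positive
because `φ` is strictly increasing: a flat piece of `φ` would propagate through the wave equation up
to `+∞`.
-/

section Calculus

open Set

variable {D E : Set ℝ} {g : ℝ → ℝ}

lemma sub_le_mul_sub_of_derivWithin_le {C : ℝ} (hE : Convex ℝ E) (hED : E ⊆ D)
    (hg : DifferentiableOn ℝ g D) (hC : ∀ x ∈ E, derivWithin g D x ≤ C) {x y : ℝ}
    (hx : x ∈ E) (hy : y ∈ E) (hxy : x ≤ y) : g y - g x ≤ C * (y - x) := by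
  refine hE.image_sub_le_mul_sub_of_deriv_le (hg.continuousOn.mono hED)
    (hg.mono (interior_subset.trans hED)) (fun w hw => ?_) x hx y hy hxy
  rw [← derivWithin_of_mem_nhds (Filter.mem_of_superset (mem_interior_iff_mem_nhds.mp hw) hED)]
  exact hC w (interior_subset hw)

lemma exists_sub_le_mul_sub_near (hg : ContDiffOn ℝ 1 g D) (hD : Convex ℝ D)
    (hD' : UniqueDiffOn ℝ D) {p ρ : ℝ} (hp : p ∈ D) (hρ : derivWithin g D p < ρ) :
    ∃ η > 0, ∀ x ∈ D, ∀ y ∈ D, p - η ≤ x → x ≤ y → y ≤ p + η → g y - g x ≤ ρ * (y - x) := by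
  have hlt : ∀ᶠ x in 𝓝[D] p, derivWithin g D x < ρ :=
    (hg.continuousOn_derivWithin hD' le_rfl p hp).eventually_lt_const hρ
  obtain ⟨η, hη, hball⟩ :=
    (nhdsWithin_hasBasis Metric.nhds_basis_closedBall D).eventually_iff.mp hlt
  rw [Real.closedBall_eq_Icc] at hball
  refine ⟨η, hη, fun x hx y hy hpx hxy hyp => ?_⟩
  exact sub_le_mul_sub_of_derivWithin_le ((convex_Icc _ _).inter hD) inter_subset_right
    (hg.differentiableOn one_ne_zero) (fun w hw => (hball hw).le)
    ⟨⟨hpx, hxy.trans hyp⟩, hx⟩ ⟨⟨hpx.trans hxy, hyp⟩, hy⟩ hxy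

lemma mul_sub_le_integral_comp_add_sub {v : ℝ → ℝ} (hv : Monotone v) (a b : ℝ) {k : ℝ}
    (hk : 0 ≤ k) : k * (v b - v (a + k)) ≤ ∫ s in a..b, (v (s + k) - v s) := by
  have hint (c d : ℝ) : IntervalIntegrable v volume c d := hv.intervalIntegrable
  have hint_add : IntervalIntegrable (fun s => v (s + k)) volume a b :=
    Monotone.intervalIntegrable fun _ _ hst => hv (by linarith)
  have hswap : ∫ s in a..b, (v (s + k) - v s) =
      (∫ s in b..b + k, v s) - ∫ s in a..a + k, v s := by
    rw [intervalIntegral.integral_sub hint_add (hint _ _),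
      intervalIntegral.integral_comp_add_right,
      intervalIntegral.integral_interval_sub_interval_comm' (hint _ _) (hint _ _) (hint _ _)]
  have hlower : k * v b ≤ ∫ s in b..b + k, v s := by
    simpa using intervalIntegral.integral_mono_on (le_add_of_nonneg_right hk)
      intervalIntegrable_const (hint _ _) (fun s hs => hv hs.1)
  have hupper : ∫ s in a..a + k, v s ≤ k * v (a + k) := by
    simpa using intervalIntegral.integral_mono_on (le_add_of_nonneg_right hk)
      (hint _ _) intervalIntegrable_const (fun s hs => hv hs.2)
  rw [hswap, mul_sub]
  exact sub_le_sub hlower hupper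

lemma exists_pos_forall_Icc_le {q : ℝ → ℝ} (hq : Continuous q) {z : ℝ} (hz : 0 < q z) :
    ∃ κ > 0, ∃ r > 0, ∀ y ∈ Icc (z - r) (z + r), κ ≤ q y := by
  obtain ⟨r, hr, hball⟩ := Metric.nhds_basis_closedBall.eventually_iff.mp
    (hq.continuousAt.eventually_const_le (half_lt_self hz))
  rw [Real.closedBall_eq_Icc] at hball
  exact ⟨q z / 2, half_pos hz, r, hr, fun y hy => hball hy⟩

lemma eventually_exists_nat_mul_eq {a b : ℝ} (ha : 0 < a) (hab : a < b) :
    ∀ᶠ t : ℝ in atTop, ∃ n : ℕ, ∃ d ∈ Ioo a b, n * d = t := by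
  have hb : 0 < b := ha.trans hab
  have hgap : 0 < 1 / a - 1 / b := sub_pos.mpr (one_div_lt_one_div_of_lt ha hab)
  filter_upwards [eventually_gt_atTop 0,
    (tendsto_id.atTop_mul_const hgap).eventually_gt_atTop 1] with t ht htgap
  let n := ⌊t / b⌋₊ + 1
  have hn_lower : t / b < n := by exact_mod_cast Nat.lt_floor_add_one (t / b)
  have hn_upper : n < t / a := by
    have hfloor := Nat.floor_le (div_pos ht hb).le
    have hsplit : t * (1 / a - 1 / b) = t / a - t / b := by ring
    simp only [id_eq] at htgap
    push_cast [n]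
    linarith
  have hn : (0 : ℝ) < n := (div_pos ht hb).trans hn_lower
  refine ⟨n, t / n, ⟨?_, ?_⟩, mul_div_cancel₀ t hn.ne'⟩
  · rwa [lt_div_iff₀ hn, mul_comm, ← lt_div_iff₀ ha]
  · rwa [div_lt_iff₀ hn, mul_comm, ← div_lt_iff₀ hb]

lemma forall_nat_mul_of_forall_add {p : ℝ → Prop} {x d : ℝ} (hx : p x)
    (hstep : ∀ y, p y → p (y + d)) (n : ℕ) : p (x + n * d) := by
  induction n with
  | zero => simpa using hx
  | succ n ih =>
    have := hstep _ ih
    rwa [add_assoc, ← add_one_mul, ← Nat.cast_succ] at this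

lemma abs_sInf_superlevel_sub_le {v : ℝ → ℝ} (hv : Monotone v) {a c C : ℝ}
    (hlower : v (c - C) < a) (hupper : a ≤ v (c + C)) :
    |sInf {x | a ≤ v x} - c| ≤ C := by
  have hbound : ∀ x ∈ {x | a ≤ v x}, c - C ≤ x := fun x hx =>
    (hv.reflect_lt (hlower.trans_le hx)).le
  have hmem : c + C ∈ {x | a ≤ v x} := hupper
  have hle := csInf_le ⟨_, hbound⟩ hmem
  have hge := le_csInf ⟨_, hmem⟩ hbound
  exact abs_le.mpr ⟨by linarith, by linarith⟩

end Calculus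

section Convolution

open Set

/-- A nondecreasing function with values in `[0,1]`: the distribution function of a random
variable, without right-continuity and possibly with mass lost at `±∞`. -/
structure IsMonotoneProfile (v : ℝ → ℝ) : Prop where
  mono : Monotone v
  mem_Icc : ∀ x, v x ∈ Icc (0 : ℝ) 1

variable {q v w : ℝ → ℝ}

lemma conv_qshift (q v : ℝ → ℝ) (ℓ x : ℝ) : conv (qshift q ℓ) v x = conv q v (x + ℓ) := by
  unfold conv qshift
  rw [← integral_add_right_eq_self (fun y => q y * v (x + ℓ - y)) ℓ]
  simp only [add_sub_add_right_eq_sub]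

lemma IsMonotoneProfile.integrable_mul_comp_sub (hv : IsMonotoneProfile v) (hq : Integrable q)
    (x : ℝ) : Integrable fun y => q y * v (x - y) := by
  refine hq.mul_bdd (c := 1) ?_ (.of_forall fun y => ?_)
  · exact (hv.mono.measurable.comp (measurable_const.sub measurable_id)).aestronglyMeasurable
  · rw [Real.norm_of_nonneg (hv.mem_Icc _).1]
    exact (hv.mem_Icc _).2

lemma IsMonotoneProfile.integrable_mul_increment (hv : IsMonotoneProfile v) (hq : Integrable q)
    (k x : ℝ) : Integrable fun y => q y * (v (x - y + k) - v (x - y)) := by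
  simpa only [mul_sub, sub_add_eq_add_sub] using!
    (hv.integrable_mul_comp_sub hq (x + k)).sub (hv.integrable_mul_comp_sub hq x)

lemma conv_comp_add_sub (hq : Integrable q) (hv : IsMonotoneProfile v) (k x : ℝ) :
    conv q (fun s => v (s + k) - v s) x = conv q v (x + k) - conv q v x := by
  unfold conv
  rw [← integral_sub (hv.integrable_mul_comp_sub hq _) (hv.integrable_mul_comp_sub hq _)]
  simp only [mul_sub, sub_add_eq_add_sub]

lemma eq_zero_of_conv_eq_zero (hq : Continuous q) (hq_nonneg : ∀ y, 0 ≤ q y) (hv : Continuous v)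
    (hv_nonneg : ∀ y, 0 ≤ v y) {x z : ℝ} (hint : Integrable fun y => q y * v (x - y))
    (hconv : conv q v x = 0) (hz : 0 < q z) : v (x - z) = 0 := by
  have hae := (integral_eq_zero_iff_of_nonneg
    (fun y => mul_nonneg (hq_nonneg y) (hv_nonneg (x - y))) hint).mp hconv
  have hcont : Continuous fun y => q y * v (x - y) := by fun_prop
  have hzero := congrFun ((hcont.ae_eq_iff_eq volume continuous_zero).mp hae) z
  exact (mul_eq_zero.mp hzero).resolve_left hz.ne'

/-- Reflection of a profile: if `v` is the distribution function of `M`, this is, up to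
right-continuity, that of `-M`. It turns lower bounds at `+∞` into upper bounds at `-∞`. -/
def reflectProfile (v : ℝ → ℝ) (x : ℝ) : ℝ := 1 - v (-x)

lemma IsMonotoneProfile.reflect (hv : IsMonotoneProfile v) :
    IsMonotoneProfile (reflectProfile v) where
  mono _ _ hxy := sub_le_sub_left (hv.mono (neg_le_neg hxy)) 1
  mem_Icc _ := ⟨sub_nonneg.mpr (hv.mem_Icc _).2, sub_le_self _ (hv.mem_Icc _).1⟩

lemma tendsto_reflectProfile_atBot (hv : Tendsto v atTop (𝓝 1)) :
    Tendsto (reflectProfile v) atBot (𝓝 0) := by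
  simpa using! (hv.comp tendsto_neg_atBot_atTop).const_sub 1

lemma tendsto_reflectProfile_atTop (hv : Tendsto v atBot (𝓝 0)) :
    Tendsto (reflectProfile v) atTop (𝓝 1) := by
  simpa using! (hv.comp tendsto_neg_atTop_atBot).const_sub 1

/-- A continuous probability density on `ℝ`. -/
structure IsContinuousDensity (q : ℝ → ℝ) : Prop where
  continuous : Continuous q
  nonneg : ∀ x, 0 ≤ q x
  integral_eq_one : ∫ x, q x = 1

namespace IsContinuousDensity

lemma integrable (hq : IsContinuousDensity q) : Integrable q :=
  integrable_of_integral_eq_one hq.integral_eq_one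

lemma comp_neg (hq : IsContinuousDensity q) : IsContinuousDensity fun x => q (-x) where
  continuous := hq.continuous.comp continuous_neg
  nonneg x := hq.nonneg (-x)
  integral_eq_one := (integral_neg_eq_self q volume).trans hq.integral_eq_one

lemma conv_le_conv_add (hq : IsContinuousDensity q) (hv : IsMonotoneProfile v)
    (hw : IsMonotoneProfile w) {a d : ℝ} (hvw : ∀ x, v x ≤ w (x + a) + d) (x : ℝ) :
    conv q v x ≤ conv q w (x + a) + d := by
  have hconst : ∫ y, q y * d = d := by rw [integral_mul_const, hq.integral_eq_one, one_mul]
  have hint := hw.integrable_mul_comp_sub hq.integrable (x + a)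
  calc conv q v x
      ≤ ∫ y, (q y * w (x + a - y) + q y * d) := by
        refine integral_mono (hv.integrable_mul_comp_sub hq.integrable x)
          (hint.add (hq.integrable.mul_const d)) fun y => ?_
        simp only [← mul_add]
        exact mul_le_mul_of_nonneg_left (by simpa [add_sub_right_comm] using hvw (x - y))
          (hq.nonneg y)
    _ = conv q w (x + a) + d := by
        rw [integral_add hint (hq.integrable.mul_const d), hconst]; rfl

lemma conv_mem_Icc (hq : IsContinuousDensity q) (hv : IsMonotoneProfile v) (x : ℝ) :
    conv q v x ∈ Icc (0 : ℝ) 1 := by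
  refine ⟨integral_nonneg fun y => mul_nonneg (hq.nonneg y) (hv.mem_Icc _).1, ?_⟩
  rw [← hq.integral_eq_one]
  exact integral_mono (hv.integrable_mul_comp_sub hq.integrable x) hq.integrable
    fun y => mul_le_of_le_one_right (hq.nonneg y) (hv.mem_Icc _).2

lemma monotone_conv (hq : IsContinuousDensity q) (hv : IsMonotoneProfile v) :
    Monotone (conv q v) := by
  intro x y hxy
  simpa using hq.conv_le_conv_add hv hv (a := y - x) (d := 0)
    (fun s => by simpa using hv.mono (by linarith : s ≤ s + (y - x))) x

lemma conv_reflect (hq : IsContinuousDensity q) (hv : IsMonotoneProfile v) (x : ℝ) :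
    conv (fun y => q (-y)) (reflectProfile v) x = 1 - conv q v (-x) := by
  unfold conv reflectProfile
  rw [← hq.integral_eq_one,
    ← integral_sub hq.integrable (hv.integrable_mul_comp_sub hq.integrable _),
    ← integral_neg_eq_self, hq.integral_eq_one]
  congr 1 with y
  simp only [neg_neg, mul_sub, mul_one, sub_neg_eq_add, neg_add']

/-- Only the mass of `q` near `z` is kept; after integrating `v (· + k) - v` over that window
two integrals over intervals of length `k` remain. -/
lemma mul_sub_le_conv_add_sub (hq : IsContinuousDensity q) (hv : IsMonotoneProfile v)
    {κ r z : ℝ} (hκ : 0 ≤ κ) (hκq : ∀ y ∈ Icc (z - r) (z + r), κ ≤ q y) {k : ℝ} (hk : 0 ≤ k)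
    (hkr : k ≤ r) (x : ℝ) :
    κ * (k * (v (x - z + r) - v (x - z))) ≤ conv q v (x + k) - conv q v x := by
  have hincr (s : ℝ) : 0 ≤ v (s + k) - v s := sub_nonneg.mpr (hv.mono (by linarith))
  have hint := hv.integrable_mul_increment hq.integrable k x
  have hwindow : IntervalIntegrable (fun y => v (x - y + k) - v (x - y)) volume (z - r) (z + r) :=
    have hanti (c : ℝ) : Antitone fun y => v (x - y + c) := fun _ _ h => hv.mono (by linarith)
    (hanti k).intervalIntegrable.sub (by simpa using (hanti 0).intervalIntegrable)
  have hr : z - r ≤ z + r := by linarith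
  calc κ * (k * (v (x - z + r) - v (x - z)))
      ≤ κ * (k * (v (x - (z - r)) - v (x - (z + r) + k))) := by
        gcongr
        · exact hv.mono (by linarith)
        · exact hv.mono (by linarith)
    _ ≤ κ * ∫ s in (x - (z + r))..(x - (z - r)), (v (s + k) - v s) := by
        gcongr
        exact mul_sub_le_integral_comp_add_sub hv.mono _ _ hk
    _ = ∫ y in (z - r)..(z + r), κ * (v (x - y + k) - v (x - y)) := by
        rw [intervalIntegral.integral_const_mul,
          intervalIntegral.integral_comp_sub_left (fun s => v (s + k) - v s)]
    _ ≤ ∫ y in (z - r)..(z + r), q y * (v (x - y + k) - v (x - y)) :=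
        intervalIntegral.integral_mono_on hr (hwindow.const_mul κ) hint.intervalIntegrable
          fun y hy => mul_le_mul_of_nonneg_right (hκq y hy) (hincr _)
    _ ≤ ∫ y, q y * (v (x - y + k) - v (x - y)) := by
        rw [intervalIntegral.integral_of_le hr]
        exact setIntegral_le_integral hint
          (.of_forall fun y => mul_nonneg (hq.nonneg y) (hincr _))
    _ = conv q v (x + k) - conv q v x := conv_comp_add_sub hq.integrable hv k x

end IsContinuousDensity

end Convolution

section Nonlinearity

open Set
open scoped Pointwise

/-- A `C¹` increasing map of `[0,1]` fixing `0` and `1`, both linearly stable under iteration.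
Nothing is said about fixed points in `(0,1)`, nor about `g` outside `[0,1]`. -/
structure IsStableNonlinearity (g : ℝ → ℝ) : Prop where
  contDiffOn : ContDiffOn ℝ 1 g (Icc 0 1)
  map_zero : g 0 = 0
  map_one : g 1 = 1
  derivWithin_pos : ∀ t ∈ Ioo (0 : ℝ) 1, 0 < derivWithin g (Icc 0 1) t
  derivWithin_zero_lt_one : derivWithin g (Icc 0 1) 0 < 1
  derivWithin_one_lt_one : derivWithin g (Icc 0 1) 1 < 1

/-- The nonlinearity of the recursion satisfied by `reflectProfile (u n)`. -/
def reflectNonlinearity (g : ℝ → ℝ) (t : ℝ) : ℝ := 1 - g (1 - t)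

namespace IsStableNonlinearity

variable {g : ℝ → ℝ} {s t : ℝ}

lemma strictMonoOn (hg : IsStableNonlinearity g) : StrictMonoOn g (Icc 0 1) := by
  refine strictMonoOn_of_deriv_pos (convex_Icc 0 1) hg.contDiffOn.continuousOn fun t ht => ?_
  rw [interior_Icc] at ht
  rw [← derivWithin_of_mem_nhds (Icc_mem_nhds ht.1 ht.2)]
  exact hg.derivWithin_pos t ht

lemma mem_Icc (hg : IsStableNonlinearity g) (ht : t ∈ Icc (0 : ℝ) 1) : g t ∈ Icc (0 : ℝ) 1 := by
  have h0 := hg.strictMonoOn.monotoneOn (left_mem_Icc.mpr zero_le_one) ht ht.1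
  have h1 := hg.strictMonoOn.monotoneOn ht (right_mem_Icc.mpr zero_le_one) ht.2
  rw [hg.map_zero] at h0
  rw [hg.map_one] at h1
  exact ⟨h0, h1⟩

lemma mem_Ioo (hg : IsStableNonlinearity g) (ht : t ∈ Ioo (0 : ℝ) 1) : g t ∈ Ioo (0 : ℝ) 1 := by
  have ht' := Ioo_subset_Icc_self ht
  have h0 := hg.strictMonoOn (left_mem_Icc.mpr zero_le_one) ht' ht.1
  have h1 := hg.strictMonoOn ht' (right_mem_Icc.mpr zero_le_one) ht.2
  rw [hg.map_zero] at h0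
  rw [hg.map_one] at h1
  exact ⟨h0, h1⟩

lemma reflect (hg : IsStableNonlinearity g) :
    IsStableNonlinearity (reflectNonlinearity g) := by
  have hmaps : MapsTo (fun t : ℝ => 1 - t) (Icc 0 1) (Icc 0 1) := fun _ =>
    Icc.one_sub_mem
  have hderiv (t : ℝ) : derivWithin (reflectNonlinearity g) (Icc 0 1) t =
      derivWithin g (Icc 0 1) (1 - t) := by
    have himage : (1 : ℝ) +ᵥ -Icc (0 : ℝ) 1 = Icc 0 1 := by simp [← Set.image_vadd]
    change derivWithin (fun t => 1 - g (1 - t)) (Icc 0 1) t = _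
    rw [derivWithin_const_sub, derivWithin_comp_const_sub, himage, neg_neg]
  exact
    { contDiffOn := contDiffOn_const.sub
        (hg.contDiffOn.comp (contDiff_const.sub contDiff_id).contDiffOn hmaps)
      map_zero := by simp [reflectNonlinearity, hg.map_one]
      map_one := by simp [reflectNonlinearity, hg.map_zero]
      derivWithin_pos := fun t ht => by
        rw [hderiv]
        exact hg.derivWithin_pos _ ⟨by linarith [ht.2], by linarith [ht.1]⟩
      derivWithin_zero_lt_one := by simpa [hderiv] using hg.derivWithin_one_lt_one
      derivWithin_one_lt_one := by simpa [hderiv] using hg.derivWithin_zero_lt_one }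

lemma exists_contraction_near_endpoints (hg : IsStableNonlinearity g) :
    ∃ ρ ∈ Ioo (0 : ℝ) 1, ∃ η ∈ Ioo (0 : ℝ) 1, ∀ t ∈ Icc (0 : ℝ) 1, ∀ s ∈ Icc (0 : ℝ) 1,
      t ≤ s → s ≤ η ∨ 1 - η ≤ t → g s - g t ≤ ρ * (s - t) := by
  obtain ⟨ρ, hρ, hρ1⟩ := exists_between (max_lt zero_lt_one
    (max_lt hg.derivWithin_zero_lt_one hg.derivWithin_one_lt_one))
  obtain ⟨hρ0, hρg⟩ := max_lt_iff.mp hρ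
  obtain ⟨hg0, hg1⟩ := max_lt_iff.mp hρg
  have hunique := uniqueDiffOn_Icc (zero_lt_one' ℝ)
  obtain ⟨η₀, hη₀, hnear0⟩ := exists_sub_le_mul_sub_near hg.contDiffOn (convex_Icc 0 1)
    hunique (left_mem_Icc.mpr zero_le_one) hg0
  obtain ⟨η₁, hη₁, hnear1⟩ := exists_sub_le_mul_sub_near hg.contDiffOn (convex_Icc 0 1)
    hunique (right_mem_Icc.mpr zero_le_one) hg1
  obtain ⟨η, hη, hηlt⟩ := exists_between (lt_min (lt_min hη₀ hη₁) zero_lt_one)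
  obtain ⟨⟨hlt₀, hlt₁⟩, hη1⟩ : (η < η₀ ∧ η < η₁) ∧ η < 1 := by simpa using hηlt
  refine ⟨ρ, ⟨hρ0, hρ1⟩, η, ⟨hη, hη1⟩, fun t ht s hs hts hend => ?_⟩
  rcases hend with hsη | htη
  · exact hnear0 t ht s hs (by linarith [ht.1]) hts (by linarith)
  · exact hnear1 t ht s hs (by linarith) hts (by linarith [hs.2])

lemma exists_sub_le_mul_sub (hg : IsStableNonlinearity g) :
    ∃ K > 0, ∀ t ∈ Icc (0 : ℝ) 1, ∀ s ∈ Icc (0 : ℝ) 1, t ≤ s → g s - g t ≤ K * (s - t) := by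
  obtain ⟨K, hK⟩ := isCompact_Icc.bddAbove_image
    (hg.contDiffOn.continuousOn_derivWithin (uniqueDiffOn_Icc zero_lt_one) le_rfl)
  refine ⟨max K 1, by positivity, fun t ht s hs hts => ?_⟩
  exact sub_le_mul_sub_of_derivWithin_le (convex_Icc 0 1) Subset.rfl
    (hg.contDiffOn.differentiableOn one_ne_zero)
    (fun w hw => (hK (mem_image_of_mem _ hw)).trans (le_max_left K 1)) ht hs hts

lemma exists_mul_sub_le_sub (hg : IsStableNonlinearity g) {a b : ℝ} (ha : 0 < a) (hb : b < 1) :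
    ∃ m > 0, ∀ t ∈ Icc a b, ∀ s ∈ Icc a b, t ≤ s → m * (s - t) ≤ g s - g t := by
  have hsub : Icc a b ⊆ Ioo (0 : ℝ) 1 := Icc_subset_Ioo ha hb
  have hsub' : Icc a b ⊆ Icc (0 : ℝ) 1 := hsub.trans Ioo_subset_Icc_self
  obtain ⟨m, hm, hmin⟩ := isCompact_Icc.exists_forall_le'
    ((hg.contDiffOn.continuousOn_derivWithin (uniqueDiffOn_Icc zero_lt_one) le_rfl).mono hsub')
    fun t ht => hg.derivWithin_pos t (hsub ht)
  refine ⟨m, hm, fun t ht s hs hts => ?_⟩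
  refine (convex_Icc a b).mul_sub_le_image_sub_of_le_deriv (hg.contDiffOn.continuousOn.mono hsub')
    ((hg.contDiffOn.differentiableOn one_ne_zero).mono (interior_subset.trans hsub'))
    (fun w hw => ?_) t ht s hs hts
  have hw' := interior_subset hw
  rw [← derivWithin_of_mem_nhds (Icc_mem_nhds (hsub hw').1 (hsub hw').2)]
  exact hmin w hw'

end IsStableNonlinearity

end Nonlinearity

section Front

open Set

/-- A continuous nondecreasing travelling wave of speed `ℓ` from `0` to `1` for the recursion
`v ↦ g (q * v)`. By `conv_qshift`, `eq_map_conv` is the equation `φ = g (q_ℓ * φ)`. -/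
structure IsFront (q g : ℝ → ℝ) (ℓ : ℝ) (φ : ℝ → ℝ) : Prop where
  mono : Monotone φ
  continuous : Continuous φ
  eq_map_conv : ∀ x, φ x = g (conv q φ (x + ℓ))
  tendsto_atBot : Tendsto φ atBot (𝓝 0)
  tendsto_atTop : Tendsto φ atTop (𝓝 1)

namespace IsFront

variable {q g φ : ℝ → ℝ} {ℓ : ℝ}

lemma isMonotoneProfile (hφ : IsFront q g ℓ φ) : IsMonotoneProfile φ where
  mono := hφ.mono
  mem_Icc x := ⟨hφ.mono.le_of_tendsto hφ.tendsto_atBot x, hφ.mono.ge_of_tendsto hφ.tendsto_atTop x⟩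

lemma conv_mem_Icc (hφ : IsFront q g ℓ φ) (hq : IsContinuousDensity q) (x : ℝ) :
    conv q φ x ∈ Icc (0 : ℝ) 1 :=
  hq.conv_mem_Icc hφ.isMonotoneProfile x

lemma reflect (hφ : IsFront q g ℓ φ) (hq : IsContinuousDensity q) :
    IsFront (fun y => q (-y)) (reflectNonlinearity g) (-ℓ) (reflectProfile φ) where
  mono := hφ.isMonotoneProfile.reflect.mono
  continuous := continuous_const.sub (hφ.continuous.comp continuous_neg)
  eq_map_conv x := by
    rw [hq.conv_reflect hφ.isMonotoneProfile, reflectNonlinearity, sub_sub_cancel, neg_add,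
      neg_neg, ← hφ.eq_map_conv, reflectProfile]
  tendsto_atBot := tendsto_reflectProfile_atBot hφ.tendsto_atTop
  tendsto_atTop := tendsto_reflectProfile_atTop hφ.tendsto_atBot

lemma tendsto_add_nat_mul (hφ : IsFront q g ℓ φ) (x : ℝ) {d : ℝ} (hd : 0 < d) :
    Tendsto (fun n : ℕ => φ (x + n * d)) atTop (𝓝 1) :=
  hφ.tendsto_atTop.comp (tendsto_atTop_add_const_left _ _
    (tendsto_natCast_atTop_atTop.atTop_mul_const hd))

/-- Otherwise `q * φ (· + ℓ) ≤ φ`, and where `φ` is small `g` would push it strictly below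
itself. -/
lemma exists_kernel_pos_lt_speed (hφ : IsFront q g ℓ φ) (hq : IsContinuousDensity q)
    (hg : IsStableNonlinearity g) : ∃ z < ℓ, 0 < q z := by
  by_contra! hq_zero
  obtain ⟨ρ, hρ, η, hη, hcontr⟩ := hg.exists_contraction_near_endpoints
  obtain ⟨x, hx⟩ : η ∈ range φ := mem_range_of_exists_le_of_exists_ge hφ.continuous
    (hφ.tendsto_atBot.eventually_le_const hη.1).exists
    (hφ.tendsto_atTop.eventually_const_le hη.2).exists
  have hconv : conv q φ (x + ℓ) ≤ φ x := by
    calc conv q φ (x + ℓ)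
        ≤ ∫ y, q y * φ x := by
          refine integral_mono (hφ.isMonotoneProfile.integrable_mul_comp_sub hq.integrable _)
            (hq.integrable.mul_const _) fun y => ?_
          rcases lt_or_ge y ℓ with hy | hy
          · simp [le_antisymm (hq_zero y hy) (hq.nonneg y)]
          · exact mul_le_mul_of_nonneg_left (hφ.mono (by linarith)) (hq.nonneg y)
      _ = φ x := by rw [integral_mul_const, hq.integral_eq_one, one_mul]
  have hmem := hφ.conv_mem_Icc hq (x + ℓ)
  have hle := hcontr 0 (left_mem_Icc.mpr zero_le_one) _ hmem hmem.1 (.inl (hconv.trans hx.le))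
  rw [hg.map_zero, sub_zero, sub_zero, ← hφ.eq_map_conv] at hle
  have hstrict : ρ * φ x < φ x := mul_lt_of_lt_one_left (hx ▸ hη.1) hρ.2
  linarith [mul_le_mul_of_nonneg_left hconv hρ.1.le]

lemma eq_zero_add_of_eq_zero (hφ : IsFront q g ℓ φ) (hq : IsContinuousDensity q)
    (hg : IsStableNonlinearity g) {z : ℝ} (hz : 0 < q z) {x : ℝ} (hx : φ x = 0) :
    φ (x + (ℓ - z)) = 0 := by
  have hconv : conv q φ (x + ℓ) = 0 := by
    refine hg.strictMonoOn.injOn (hφ.conv_mem_Icc hq _) (left_mem_Icc.mpr zero_le_one) ?_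
    rw [← hφ.eq_map_conv, hx, hg.map_zero]
  rw [← add_sub_assoc]
  exact eq_zero_of_conv_eq_zero hq.continuous hq.nonneg hφ.continuous
    (fun y => (hφ.isMonotoneProfile.mem_Icc y).1)
    (hφ.isMonotoneProfile.integrable_mul_comp_sub hq.integrable _) hconv hz

lemma pos (hφ : IsFront q g ℓ φ) (hq : IsContinuousDensity q) (hg : IsStableNonlinearity g)
    (x : ℝ) : 0 < φ x := by
  refine (hφ.isMonotoneProfile.mem_Icc x).1.lt_of_ne' fun hx => ?_
  obtain ⟨z, hzℓ, hz⟩ := hφ.exists_kernel_pos_lt_speed hq hg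
  have hzero := forall_nat_mul_of_forall_add (p := fun y => φ y = 0) hx
    fun _ => hφ.eq_zero_add_of_eq_zero hq hg hz
  have hlim := hφ.tendsto_add_nat_mul x (sub_pos.mpr hzℓ)
  simp only [hzero] at hlim
  exact zero_ne_one (tendsto_nhds_unique tendsto_const_nhds hlim)

lemma lt_one (hφ : IsFront q g ℓ φ) (hq : IsContinuousDensity q) (hg : IsStableNonlinearity g)
    (x : ℝ) : φ x < 1 := by
  simpa [reflectProfile] using (hφ.reflect hq).pos hq.comp_neg hg.reflect (-x)

lemma conv_mem_Ioo (hφ : IsFront q g ℓ φ) (hq : IsContinuousDensity q)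
    (hg : IsStableNonlinearity g) (x : ℝ) : conv q φ (x + ℓ) ∈ Ioo (0 : ℝ) 1 := by
  have hmem := hφ.conv_mem_Icc hq (x + ℓ)
  have heq := hφ.eq_map_conv x
  refine ⟨hmem.1.lt_of_ne' fun h0 => ?_, hmem.2.lt_of_ne fun h1 => ?_⟩
  · rw [h0, hg.map_zero] at heq
    exact (hφ.pos hq hg x).ne' heq
  · rw [h1, hg.map_one] at heq
    exact (hφ.lt_one hq hg x).ne heq

lemma eq_add_of_eq (hφ : IsFront q g ℓ φ) (hq : IsContinuousDensity q)
    (hg : IsStableNonlinearity g) {z : ℝ} (hz : 0 < q z) {k x : ℝ} (hk : 0 ≤ k)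
    (hx : φ (x + k) = φ x) : φ (x + (ℓ - z) + k) = φ (x + (ℓ - z)) := by
  have hprofile := hφ.isMonotoneProfile
  have hconv : conv q φ (x + ℓ + k) = conv q φ (x + ℓ) := by
    refine hg.strictMonoOn.injOn (hφ.conv_mem_Icc hq _) (hφ.conv_mem_Icc hq _) ?_
    rw [add_right_comm, ← hφ.eq_map_conv, ← hφ.eq_map_conv, hx]
  have hzero := eq_zero_of_conv_eq_zero (v := fun s => φ (s + k) - φ s) hq.continuous hq.nonneg
    ((hφ.continuous.comp (continuous_add_const k)).sub hφ.continuous)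
    (fun s => sub_nonneg.mpr (hφ.mono (le_add_of_nonneg_right hk)))
    (hprofile.integrable_mul_increment hq.integrable k _)
    (by rw [conv_comp_add_sub hq.integrable hprofile, hconv, sub_self]) hz
  rw [← add_sub_assoc]
  exact sub_eq_zero.mp hzero

lemma eventually_eq_add_of_eq (hφ : IsFront q g ℓ φ) (hq : IsContinuousDensity q)
    (hg : IsStableNonlinearity g) {k x : ℝ} (hk : 0 ≤ k) (hx : φ (x + k) = φ x) :
    ∀ᶠ y in atTop, φ (y + k) = φ y := by
  obtain ⟨z, hzℓ, hz⟩ := hφ.exists_kernel_pos_lt_speed hq hg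
  obtain ⟨κ, hκ, r, hr, hκq⟩ := exists_pos_forall_Icc_le hq.continuous hz
  have hlt : max (ℓ - z - r) ((ℓ - z) / 2) < ℓ - z := max_lt (by linarith) (by linarith)
  have hpos : 0 < max (ℓ - z - r) ((ℓ - z) / 2) := lt_max_of_lt_right (by linarith)
  filter_upwards [(tendsto_atTop_add_const_right _ (-x) tendsto_id).eventually
    (eventually_exists_nat_mul_eq hpos hlt)] with y hy
  obtain ⟨n, d, ⟨hd_lower, hd_upper⟩, hnd⟩ := hy
  have hkernel : 0 < q (ℓ - d) := hκ.trans_le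
    (hκq _ ⟨by linarith, by linarith [le_max_left (ℓ - z - r) ((ℓ - z) / 2)]⟩)
  have hflat := forall_nat_mul_of_forall_add (p := fun y => φ (y + k) = φ y) (d := d) hx
    (fun y hy => by simpa using hφ.eq_add_of_eq hq hg hkernel hk hy) n
  simpa [hnd] using hflat

lemma strictMono (hφ : IsFront q g ℓ φ) (hq : IsContinuousDensity q)
    (hg : IsStableNonlinearity g) : StrictMono φ := by
  refine fun x y hxy => (hφ.mono hxy.le).lt_of_ne fun heq => ?_
  have hk : 0 < y - x := sub_pos.mpr hxy
  obtain ⟨R, hR⟩ := eventually_atTop.mp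
    (hφ.eventually_eq_add_of_eq hq hg hk.le (x := x) (by rw [add_sub_cancel, heq]))
  have hconst := forall_nat_mul_of_forall_add (p := fun w => R ≤ w ∧ φ w = φ R) (d := y - x)
    ⟨le_rfl, rfl⟩ fun w hw => ⟨by linarith [hw.1], (hR w hw.1).trans hw.2⟩
  have hlim := hφ.tendsto_add_nat_mul R hk
  simp only [fun n => (hconst n).2] at hlim
  exact (hφ.lt_one hq hg R).ne (tendsto_nhds_unique tendsto_const_nhds hlim)

lemma exists_mul_le_sub (hφ : IsFront q g ℓ φ) (hq : IsContinuousDensity q)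
    (hg : IsStableNonlinearity g) (L R : ℝ) :
    ∃ c > 0, ∃ r > 0, ∀ x ∈ Icc L R, ∀ k ∈ Icc 0 r, c * k ≤ φ (x + k) - φ x := by
  obtain ⟨z, -, hz⟩ := hφ.exists_kernel_pos_lt_speed hq hg
  obtain ⟨κ, hκ, r, hr, hκq⟩ := exists_pos_forall_Icc_le hq.continuous hz
  obtain ⟨m, hm, hexpand⟩ := hg.exists_mul_sub_le_sub
    (hφ.conv_mem_Ioo hq hg L).1 (hφ.conv_mem_Ioo hq hg (R + r)).2
  have hcont := hφ.continuous
  obtain ⟨μ, hμ, hincr⟩ := (isCompact_Icc (a := L) (b := R)).exists_forall_le'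
    (f := fun x => φ (x + ℓ - z + r) - φ (x + ℓ - z)) (by fun_prop)
    (fun x _ => sub_pos.mpr (hφ.strictMono hq hg (lt_add_of_pos_right _ hr)))
  refine ⟨m * κ * μ, by positivity, r, hr, fun x hx k hk => ?_⟩
  have hmono := hq.monotone_conv hφ.isMonotoneProfile
  calc m * κ * μ * k = m * (κ * (k * μ)) := by ring
    _ ≤ m * (κ * (k * (φ (x + ℓ - z + r) - φ (x + ℓ - z)))) := by
        gcongr
        · exact hk.1
        · exact hincr x hx
    _ ≤ m * (conv q φ (x + ℓ + k) - conv q φ (x + ℓ)) := by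
        gcongr
        exact hq.mul_sub_le_conv_add_sub hφ.isMonotoneProfile hκ.le hκq hk.1 hk.2 (x + ℓ)
    _ ≤ g (conv q φ (x + ℓ + k)) - g (conv q φ (x + ℓ)) :=
        hexpand _ ⟨hmono (by linarith [hx.1]), hmono (by linarith [hx.2, hk.1, hk.2])⟩
          _ ⟨hmono (by linarith [hx.1, hk.1]), hmono (by linarith [hx.2, hk.2])⟩
          (hmono (by linarith [hk.1]))
    _ = φ (x + k) - φ x := by rw [add_right_comm, ← hφ.eq_map_conv, ← hφ.eq_map_conv]

end IsFront

end Front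

section Comparison

open Set

variable {q g φ : ℝ → ℝ} {ℓ : ℝ}

/-- Near `0` and `1` an excess `d` is contracted by `g`; in between, where `g` may expand it up
to `K * d`, it is compensated by moving the front, which grows at a rate `c`, by `K / c * d`. -/
lemma IsFront.exists_absorb_excess (hφ : IsFront q g ℓ φ) (hq : IsContinuousDensity q)
    (hg : IsStableNonlinearity g) :
    ∃ ρ ∈ Ioo (0 : ℝ) 1, ∃ B > 0, ∃ δ > 0, ∀ d ∈ Icc 0 δ, ∀ y, ∀ s ∈ Icc (0 : ℝ) 1,
      s ≤ conv q φ (y + ℓ) + d → g s ≤ φ (y + B * d) + ρ * d := by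
  obtain ⟨ρ, hρ, η, hη, hcontr⟩ := hg.exists_contraction_near_endpoints
  obtain ⟨K, hK, hlip⟩ := hg.exists_sub_le_mul_sub
  have hlow : η / 2 ∈ Ioo (0 : ℝ) 1 := ⟨half_pos hη.1, by linarith [hη.1, hη.2]⟩
  have hhigh : 1 - η ∈ Ioo (0 : ℝ) 1 := ⟨sub_pos.mpr hη.2, sub_lt_self 1 hη.1⟩
  obtain ⟨L, hL⟩ := (hφ.tendsto_atBot.eventually_lt_const (hg.mem_Ioo hlow).1).exists
  obtain ⟨R, hR⟩ := (hφ.tendsto_atTop.eventually_const_lt (hg.mem_Ioo hhigh).2).exists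
  obtain ⟨c, hc, r, hr, hgrow⟩ := hφ.exists_mul_le_sub hq hg L R
  have hB : 0 < K / c := div_pos hK hc
  refine ⟨ρ, hρ, K / c, hB, min (η / 2) (r / (K / c)), lt_min hlow.1 (div_pos hr hB),
    fun d hd y s hs hsd => ?_⟩
  have hmem := hφ.conv_mem_Icc hq (y + ℓ)
  have hφy := hφ.eq_map_conv y
  set t := conv q φ (y + ℓ)
  have hshift : φ y ≤ φ (y + K / c * d) :=
    hφ.mono (le_add_of_nonneg_right (mul_nonneg hB.le hd.1))
  have hρd : 0 ≤ ρ * d := mul_nonneg hρ.1.le hd.1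
  rcases le_total s t with hst | hts
  · linarith [hg.strictMonoOn.monotoneOn hs hmem hst]
  by_cases hend : s ≤ η ∨ 1 - η ≤ t
  · linarith [hcontr t hmem s hs hts hend,
      mul_le_mul_of_nonneg_left (sub_le_iff_le_add'.mpr hsd) hρ.1.le]
  · obtain ⟨hηs, htη⟩ := not_or.mp hend
    have htη' : η / 2 ≤ t := by linarith [hd.2.trans (min_le_left _ _)]
    have hLy : L ≤ y := (hφ.mono.reflect_lt (hL.trans_le (hφy ▸
      hg.strictMonoOn.monotoneOn (Ioo_subset_Icc_self hlow) hmem htη'))).le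
    have hyR : y ≤ R := (hφ.mono.reflect_lt (hR.trans_le' (hφy ▸
      hg.strictMonoOn.monotoneOn hmem (Ioo_subset_Icc_self hhigh) (not_le.mp htη).le))).le
    have hgain := hgrow y ⟨hLy, hyR⟩ (K / c * d) ⟨mul_nonneg hB.le hd.1, by
      rw [mul_comm, ← le_div_iff₀ hB]; exact hd.2.trans (min_le_right _ _)⟩
    rw [← mul_assoc, mul_div_cancel₀ K hc.ne'] at hgain
    linarith [hlip t hmem s hs hts,
      mul_le_mul_of_nonneg_left (sub_le_iff_le_add'.mpr hsd) hK.le]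

lemma IsMonotoneProfile.map_conv {v : ℝ → ℝ} (hv : IsMonotoneProfile v)
    (hq : IsContinuousDensity q) (hg : IsStableNonlinearity g) :
    IsMonotoneProfile fun x => g (conv q v x) where
  mono x y hxy := hg.strictMonoOn.monotoneOn (hq.conv_mem_Icc hv x) (hq.conv_mem_Icc hv y)
    (hq.monotone_conv hv hxy)
  mem_Icc x := hg.mem_Icc (hq.conv_mem_Icc hv x)

variable {u : ℕ → ℝ → ℝ}

lemma isMonotoneProfile_of_recursion (hq : IsContinuousDensity q) (hg : IsStableNonlinearity g)
    (hu0 : IsMonotoneProfile (u 0)) (hrec : ∀ n x, u (n + 1) x = g (conv q (u n) x)) (n : ℕ) :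
    IsMonotoneProfile (u n) := by
  induction n with
  | zero => exact hu0
  | succ n ih => simpa only [← hrec] using! ih.map_conv hq hg

lemma IsFront.exists_recursion_le_shift_add (hφ : IsFront q g ℓ φ) (hq : IsContinuousDensity q)
    (hg : IsStableNonlinearity g) :
    ∃ δ₀ > 0, ∀ δ ∈ Icc 0 δ₀, ∀ u : ℕ → ℝ → ℝ, (∀ n, IsMonotoneProfile (u n)) →
      (∀ n x, u (n + 1) x = g (conv q (u n) x)) → ∀ a, (∀ x, u 0 x ≤ φ (x + a) + δ) →
      ∃ A, ∀ n : ℕ, ∀ x, u n x ≤ φ (x - n * ℓ + A) + δ := by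
  obtain ⟨ρ, hρ, B, hB, δ₀, hδ₀, habsorb⟩ := hφ.exists_absorb_excess hq hg
  refine ⟨δ₀, hδ₀, fun δ hδ u hu hrec a h0 => ?_⟩
  have hρ1 : 0 < 1 - ρ := sub_pos.mpr hρ.2
  have hexcess (n : ℕ) : 0 ≤ δ * ρ ^ n ∧ δ * ρ ^ n ≤ δ :=
    ⟨mul_nonneg hδ.1 (pow_nonneg hρ.1.le n),
      mul_le_of_le_one_right hδ.1 (pow_le_one₀ hρ.1.le hρ.2.le)⟩
  let B' := B / (1 - ρ)
  have hB' : B' * (1 - ρ) = B := div_mul_cancel₀ B hρ1.ne'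
  have hsuper (n : ℕ) (x : ℝ) :
      u n x ≤ φ (x + (a + B' * δ - n * ℓ - B' * (δ * ρ ^ n))) + δ * ρ ^ n := by
    induction n generalizing x with
    | zero => simpa using h0 x
    | succ n ih =>
      have hconv := hq.conv_le_conv_add (hu n) hφ.isMonotoneProfile ih x
      have hstep := habsorb (δ * ρ ^ n) ⟨(hexcess n).1, (hexcess n).2.trans hδ.2⟩
        (x + (a + B' * δ - n * ℓ - B' * (δ * ρ ^ n)) - ℓ) _ (hq.conv_mem_Icc (hu n) x)
        (by rwa [sub_add_cancel])
      rw [hrec]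
      convert hstep using 2
      · rw [← hB']; push_cast; ring_nf
      · ring
  refine ⟨a + B' * δ, fun n x => (hsuper n x).trans (add_le_add (hφ.mono ?_) (hexcess n).2)⟩
  have hdisp : 0 ≤ B' * (δ * ρ ^ n) := mul_nonneg (div_pos hB hρ1).le (hexcess n).1
  linarith

lemma IsFront.exists_initial_le_shift_add (hφ : IsFront q g ℓ φ) {v : ℝ → ℝ}
    (hv : IsMonotoneProfile v) (hbot : Tendsto v atBot (𝓝 0)) {δ : ℝ} (hδ : 0 < δ) :
    ∃ a, ∀ x, v x ≤ φ (x + a) + δ := by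
  obtain ⟨L, hL⟩ := (hbot.eventually_le_const hδ).exists
  obtain ⟨R, hR⟩ := (hφ.tendsto_atTop.eventually_const_le (sub_lt_self 1 hδ)).exists
  refine ⟨R - L, fun x => ?_⟩
  rcases le_total x L with hx | hx
  · linarith [hv.mono hx, (hφ.isMonotoneProfile.mem_Icc (x + (R - L))).1]
  · linarith [(hv.mem_Icc x).2, hφ.mono (by linarith : R ≤ x + (R - L))]

lemma IsFront.exists_recursion_le (hφ : IsFront q g ℓ φ) (hq : IsContinuousDensity q)
    (hg : IsStableNonlinearity g) (hu : ∀ n, IsMonotoneProfile (u n))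
    (hbot : Tendsto (u 0) atBot (𝓝 0)) (hrec : ∀ n x, u (n + 1) x = g (conv q (u n) x))
    {ε : ℝ} (hε : 0 < ε) : ∃ C, ∀ n : ℕ, u n (n * ℓ - C) ≤ ε := by
  obtain ⟨δ₀, hδ₀, htrap⟩ := hφ.exists_recursion_le_shift_add hq hg
  have hδ : 0 < min δ₀ (ε / 2) := lt_min hδ₀ (half_pos hε)
  obtain ⟨a, ha⟩ := hφ.exists_initial_le_shift_add (hu 0) hbot hδ
  obtain ⟨A, hA⟩ := htrap _ ⟨hδ.le, min_le_left _ _⟩ u hu hrec a ha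
  obtain ⟨L, hL⟩ := (hφ.tendsto_atBot.eventually_le_const (half_pos hε)).exists
  refine ⟨A - L, fun n => (hA n _).trans ?_⟩
  rw [show (n : ℝ) * ℓ - (A - L) - n * ℓ + A = L by ring]
  linarith [min_le_right δ₀ (ε / 2)]

lemma reflect_recursion (hq : IsContinuousDensity q) (hu : ∀ n, IsMonotoneProfile (u n))
    (hrec : ∀ n x, u (n + 1) x = g (conv q (u n) x)) (n : ℕ) (x : ℝ) :
    reflectProfile (u (n + 1)) x =
      reflectNonlinearity g (conv (fun y => q (-y)) (reflectProfile (u n)) x) := by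
  rw [hq.conv_reflect (hu n), reflectNonlinearity, sub_sub_cancel, reflectProfile, hrec]

lemma IsFront.exists_le_recursion (hφ : IsFront q g ℓ φ) (hq : IsContinuousDensity q)
    (hg : IsStableNonlinearity g) (hu : ∀ n, IsMonotoneProfile (u n))
    (htop : Tendsto (u 0) atTop (𝓝 1)) (hrec : ∀ n x, u (n + 1) x = g (conv q (u n) x))
    {ε : ℝ} (hε : 0 < ε) : ∃ C, ∀ n : ℕ, 1 - ε ≤ u n (n * ℓ + C) := by
  obtain ⟨C, hC⟩ := (hφ.reflect hq).exists_recursion_le hq.comp_neg hg.reflect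
    (u := fun n => reflectProfile (u n)) (fun n => (hu n).reflect)
    (tendsto_reflectProfile_atBot htop) (reflect_recursion hq hu hrec) hε
  refine ⟨C, fun n => ?_⟩
  have hn := hC n
  rw [reflectProfile, neg_sub, mul_neg, sub_neg_eq_add, add_comm C] at hn
  linarith

end Comparison

theorem bistable_recursion_tightness_general {q g φ : ℝ → ℝ} {ℓ : ℝ}
    (hq : IsContinuousDensity q) (hg : IsStableNonlinearity g) (hφ : IsFront q g ℓ φ)
    {u : ℕ → ℝ → ℝ} (hu0 : IsMonotoneProfile (u 0)) (hbot : Tendsto (u 0) atBot (𝓝 0))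
    (htop : Tendsto (u 0) atTop (𝓝 1)) (hrec : ∀ n x, u (n + 1) x = g (conv q (u n) x)) :
    (∀ ε > 0, ∃ C > 0, ∀ n : ℕ, 1 - ε ≤ u n (n * ℓ + C) ∧ u n (n * ℓ - C) ≤ ε) ∧
      ∀ a ∈ Set.Ioo (0 : ℝ) 1, ∃ M, ∀ n : ℕ, |sInf {x | a ≤ u n x} - n * ℓ| ≤ M := by
  have hu := isMonotoneProfile_of_recursion hq hg hu0 hrec
  have htight : ∀ ε > 0, ∃ C > 0, ∀ n : ℕ,
      1 - ε ≤ u n (n * ℓ + C) ∧ u n (n * ℓ - C) ≤ ε := by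
    intro ε hε
    obtain ⟨C₁, hC₁⟩ := hφ.exists_le_recursion hq hg hu htop hrec hε
    obtain ⟨C₂, hC₂⟩ := hφ.exists_recursion_le hq hg hu hbot hrec hε
    obtain ⟨C, hC⟩ := exists_gt (max (max C₁ C₂) 0)
    obtain ⟨⟨hC₁C, hC₂C⟩, hC0⟩ : (C₁ < C ∧ C₂ < C) ∧ 0 < C := by simpa using hC
    exact ⟨C, hC0, fun n => ⟨(hC₁ n).trans ((hu n).mono (by linarith)),
      ((hu n).mono (by linarith)).trans (hC₂ n)⟩⟩
  refine ⟨htight, fun a ha => ?_⟩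
  obtain ⟨ε, hε, hεa⟩ := exists_between (lt_min ha.1 (sub_pos.mpr ha.2))
  obtain ⟨C, -, hC⟩ := htight ε hε
  obtain ⟨hεa₀, hεa₁⟩ := lt_min_iff.mp hεa
  exact ⟨C, fun n => abs_sInf_superlevel_sub_le (hu n).mono ((hC n).2.trans_lt hεa₀)
    ((hC n).1.trans' (by linarith))⟩

section StepInitialCondition

open Set

namespace BistableSetting

lemma isContinuousDensity (S : BistableSetting) : IsContinuousDensity S.q where
  continuous := S.hq_diff.continuous
  nonneg := S.hq_nonneg
  integral_eq_one := S.hq_int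

lemma eqOn_g_eval (S : BistableSetting) : EqOn S.g (fun t => S.P.eval t) (Icc 0 1) :=
  fun t ht => by simp [g, not_lt.mpr ht.1, ht.2]

lemma derivWithin_g (S : BistableSetting) {t : ℝ} (ht : t ∈ Icc (0 : ℝ) 1) :
    derivWithin S.g (Icc 0 1) t = S.P.derivative.eval t := by
  rw [derivWithin_congr S.eqOn_g_eval (S.eqOn_g_eval ht),
    S.P.derivWithin (uniqueDiffOn_Icc zero_lt_one t ht)]

lemma isStableNonlinearity (S : BistableSetting) : IsStableNonlinearity S.g where
  contDiffOn := by
    have hP := S.P.contDiff_aeval (𝕜 := ℝ) 1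
    simp only [Polynomial.coe_aeval_eq_eval] at hP
    exact hP.contDiffOn.congr S.eqOn_g_eval
  map_zero := (S.eqOn_g_eval (left_mem_Icc.mpr zero_le_one)).trans S.hP0
  map_one := (S.eqOn_g_eval (right_mem_Icc.mpr zero_le_one)).trans S.hP1
  derivWithin_pos t ht := by
    rw [S.derivWithin_g (Ioo_subset_Icc_self ht)]
    exact S.hP_mono t ht
  derivWithin_zero_lt_one := by
    rw [S.derivWithin_g (left_mem_Icc.mpr zero_le_one)]
    exact S.hf'0
  derivWithin_one_lt_one := by
    rw [S.derivWithin_g (right_mem_Icc.mpr zero_le_one)]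
    exact S.hf'1

end BistableSetting

lemma IsTravelingWave.isFront {S : BistableSetting} {ℓ : ℝ} {φ : ℝ → ℝ}
    (h : IsTravelingWave S ℓ φ) : IsFront S.q S.g ℓ φ where
  mono := h.mono
  continuous := h.smooth.continuous
  eq_map_conv x := by rw [h.wave_eq, conv_qshift]
  tendsto_atBot := h.limit_bot
  tendsto_atTop := h.limit_top

variable {v : ℝ → ℝ}

lemma isMonotoneProfile_of_eq_step (hv : ∀ x, v x = if 0 ≤ x then 1 else 0) :
    IsMonotoneProfile v where
  mono x y hxy := by rw [hv, hv]; split_ifs <;> linarith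
  mem_Icc x := by rw [hv]; split_ifs <;> simp

lemma tendsto_atBot_of_eq_step (hv : ∀ x, v x = if 0 ≤ x then 1 else 0) :
    Tendsto v atBot (𝓝 0) :=
  tendsto_const_nhds.congr' <| (eventually_lt_atBot 0).mono fun x hx => by
    rw [hv, if_neg hx.not_ge]

lemma tendsto_atTop_of_eq_step (hv : ∀ x, v x = if 0 ≤ x then 1 else 0) :
    Tendsto v atTop (𝓝 1) :=
  tendsto_const_nhds.congr' <| (eventually_ge_atTop 0).mono fun x hx => by rw [hv, if_pos hx]

end StepInitialCondition

/-- Tightness for the bistable recursion started from a step initial condition: the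
distribution functions `u_n` are trapped within distance `O(1)` of `nℓ`, where `ℓ` is
the traveling wave speed; in particular the medians satisfy `med_n = nℓ + O(1)`. -/
theorem bistable_recursion_tightness (S : BistableSetting) (ℓ : ℝ) (φ : ℝ → ℝ)
    (h : IsTravelingWave S ℓ φ) (u : ℕ → ℝ → ℝ)
    (h0 : ∀ x : ℝ, u 0 x = if 0 ≤ x then 1 else 0)
    (hrec : ∀ (n : ℕ) (x : ℝ), u (n + 1) x = S.g (conv S.q (u n) x)) :
    (∀ ε ∈ Set.Ioo (0 : ℝ) 1, ∃ C > (0 : ℝ), ∀ n : ℕ, 1 ≤ n →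
        1 - ε ≤ u n (n * ℓ + C) ∧ u n (n * ℓ - C) ≤ ε) ∧
    ∃ M : ℝ, ∀ n : ℕ, 1 ≤ n →
      |sInf {x : ℝ | 1 / 2 ≤ u n x} - n * ℓ| ≤ M := by
  obtain ⟨htight, hquantile⟩ := bistable_recursion_tightness_general S.isContinuousDensity
    S.isStableNonlinearity h.isFront (isMonotoneProfile_of_eq_step h0)
    (tendsto_atBot_of_eq_step h0) (tendsto_atTop_of_eq_step h0) hrec
  refine ⟨fun ε hε => ?_, ?_⟩
  · obtain ⟨C, hC, hn⟩ := htight ε hε.1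
    exact ⟨C, hC, fun n _ => hn n⟩
  · obtain ⟨M, hM⟩ := hquantile (1 / 2) ⟨by norm_num, by norm_num⟩
    exact ⟨M, fun n _ => hM n⟩
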